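/- arXiv:2002.00242 — 2 statements merged into one kernel-verified Lean document; each statement's English description precedes it below -/
import Mathlib

section
/- Let (R,𝔪) be a Noetherian local ring of Krull dimension d > 0 and let x ∈ 𝔪 be a parameter, i.e., the Krull dimension of R/(x) equals d − 1. If R/(x) is an integral domain, then x is a non-zerodivisor on R and R is an integral domain. -/
/-!
Write `P = (x)`. If an ideal `I` is not contained in `P`, then passing from `R/I` to `R/(I + P)`
lowers the dimension by at most one, because `x` lies in the Jacobson radical, while `R/(I + P)` is
a proper quotient of the domain `R/P`; hence `dim R/I ≤ dim R/P`. As `dim R/P < dim R`, some prime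
`q` has `dim R/q > dim R/P`, and this `q` must lie strictly inside `P`. Since `x ∉ q`, every element
of `q ⊆ (x)` is `x` times an element of `q`, so `q = 0` by Nakayama's lemma.
-/

theorem lt_ringKrullDim_of_add_one_le {R : Type*} [CommSemiring R] [FiniteRingKrullDim R]
    {n : WithBot ℕ∞} (h : n + 1 ≤ ringKrullDim R) : n < ringKrullDim R := by
  obtain ⟨d, hd⟩ : ∃ d : ℕ, ringKrullDim R = d :=
    ⟨_, Order.krullDim_eq_length_of_finiteDimensionalOrder⟩
  rw [hd] at h ⊢
  exact ENat.WithBot.add_one_le_natCast_iff.mp h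

section CommRing

variable {R : Type*} [CommRing R]

theorem ringKrullDim_quotient_asIdeal (p : PrimeSpectrum R) :
    ringKrullDim (R ⧸ p.asIdeal) = Order.coheight p := by
  rw [ringKrullDim_quotient, Order.coheight_eq_krullDim_Ici]
  rfl

theorem exists_isPrime_lt_ringKrullDim_quotient {n : WithBot ℕ∞} (h : n < ringKrullDim R) :
    ∃ q : Ideal R, q.IsPrime ∧ n < ringKrullDim (R ⧸ q) := by
  rw [ringKrullDim, Order.krullDim_eq_iSup_coheight, lt_iSup_iff] at h
  obtain ⟨q, hq⟩ := h
  exact ⟨q.asIdeal, q.isPrime, hq.trans_eq (ringKrullDim_quotient_asIdeal q).symm⟩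

theorem ringKrullDim_quotient_add_one_le_of_isPrime_of_lt {p J : Ideal R} [p.IsPrime]
    (h : p < J) : ringKrullDim (R ⧸ J) + 1 ≤ ringKrullDim (R ⧸ p) := by
  obtain ⟨y, hyJ, hyp⟩ := SetLike.exists_of_lt h
  have hy : Ideal.Quotient.mk p y ∈ nonZeroDivisors (R ⧸ p) :=
    mem_nonZeroDivisors_of_ne_zero (mt Ideal.Quotient.eq_zero_iff_mem.mp hyp)
  refine ringKrullDim_succ_le_of_surjective (Ideal.Quotient.factor h.le)
    (Ideal.Quotient.factor_surjective h.le) hy ?_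
  rwa [Ideal.Quotient.factor_mk, Ideal.Quotient.eq_zero_iff_mem]

theorem eq_bot_of_isPrime_of_lt_span_singleton {x : R} (hx : x ∈ Ring.jacobson R) {q : Ideal R}
    [hq : q.IsPrime] (hfg : q.FG) (hlt : q < Ideal.span {x}) : q = ⊥ := by
  have hxq : x ∉ q := fun h ↦ hlt.not_ge ((Ideal.span_singleton_le_iff_mem q).mpr h)
  refine Submodule.eq_bot_of_le_smul_of_le_jacobson_bot (Ideal.span {x}) q hfg (fun y hy ↦ ?_) ?_
  · obtain ⟨r, rfl⟩ := Ideal.mem_span_singleton'.mp (hlt.le hy)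
    rw [mul_comm]
    exact Submodule.smul_mem_smul (Ideal.mem_span_singleton_self x)
      ((hq.mem_or_mem hy).resolve_right hxq)
  · rwa [Ideal.jacobson_bot, Ideal.span_singleton_le_iff_mem]

end CommRing

section IsNoetherianRing

variable {R : Type*} [CommRing R] [IsNoetherianRing R]

theorem ringKrullDim_quotient_le_ringKrullDim_quotient_sup_span_singleton_add_one (I : Ideal R)
    {x : R} (hx : x ∈ Ring.jacobson R) :
    ringKrullDim (R ⧸ I) ≤ ringKrullDim (R ⧸ I ⊔ Ideal.span {x}) + 1 := by
  have hx' : Ideal.Quotient.mk I x ∈ Ring.jacobson (R ⧸ I) :=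
    Ring.le_comap_jacobson (Ideal.Quotient.mk I) hx
  have hmap : Ideal.span {Ideal.Quotient.mk I x} =
      (Ideal.span {x}).map (Ideal.Quotient.mk I) := by
    rw [Ideal.map_span, Set.image_singleton]
  calc ringKrullDim (R ⧸ I)
    _ ≤ ringKrullDim ((R ⧸ I) ⧸ Ideal.span {Ideal.Quotient.mk I x}) + 1 := by
      simpa only [Set.encard_singleton, WithBot.coe_one] using
        ringKrullDim_le_ringKrullDim_quotient_add_encard _ (Set.singleton_subset_iff.mpr hx')
    _ = ringKrullDim (R ⧸ I ⊔ Ideal.span {x}) + 1 := by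
      rw [hmap, ringKrullDim_eq_of_ringEquiv (DoubleQuot.quotQuotEquivQuotSup I (Ideal.span {x}))]

theorem ringKrullDim_quotient_le_of_not_le_span_singleton {x : R} (hx : x ∈ Ring.jacobson R)
    [(Ideal.span {x}).IsPrime] {I : Ideal R} (hI : ¬ I ≤ Ideal.span {x}) :
    ringKrullDim (R ⧸ I) ≤ ringKrullDim (R ⧸ Ideal.span {x}) :=
  (ringKrullDim_quotient_le_ringKrullDim_quotient_sup_span_singleton_add_one I hx).trans
    (ringKrullDim_quotient_add_one_le_of_isPrime_of_lt (right_lt_sup.mpr hI))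

theorem exists_isPrime_lt_span_singleton_of_ringKrullDim_quotient_lt {x : R}
    (hx : x ∈ Ring.jacobson R) [(Ideal.span {x}).IsPrime]
    (hlt : ringKrullDim (R ⧸ Ideal.span {x}) < ringKrullDim R) :
    ∃ q : Ideal R, q.IsPrime ∧ q < Ideal.span {x} := by
  obtain ⟨q, hq, hdim⟩ := exists_isPrime_lt_ringKrullDim_quotient hlt
  have hle : q ≤ Ideal.span {x} := by
    by_contra hnle
    exact hdim.not_ge (ringKrullDim_quotient_le_of_not_le_span_singleton hx hnle)
  have hne : q ≠ Ideal.span {x} := by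
    rintro rfl
    exact hdim.false
  exact ⟨q, hq, hle.lt_of_ne hne⟩

theorem deformation_of_domain_along_parameter_general {x : R} (hx : x ∈ Ring.jacobson R)
    (hlt : ringKrullDim (R ⧸ Ideal.span {x}) < ringKrullDim R)
    (hdom : IsDomain (R ⧸ Ideal.span {x})) : x ∈ nonZeroDivisors R ∧ IsDomain R := by
  have : (Ideal.span {x}).IsPrime := (Ideal.Quotient.isDomain_iff_prime _).mp hdom
  obtain ⟨q, hq, hqx⟩ := exists_isPrime_lt_span_singleton_of_ringKrullDim_quotient_lt hx hlt
  obtain rfl := eq_bot_of_isPrime_of_lt_span_singleton hx (IsNoetherian.noetherian q) hqx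
  have hx0 : x ≠ 0 := mt Ideal.span_singleton_eq_bot.mpr hqx.ne'
  have : IsDomain R := IsDomain.of_bot_isPrime R
  exact ⟨mem_nonZeroDivisors_of_ne_zero hx0, this⟩

end IsNoetherianRing

/-- Let `(R,𝔪)` be a Noetherian local ring of Krull dimension `d > 0` and
`x ∈ 𝔪` a parameter (i.e. `dim R/(x) = d - 1`, encoded as `dim R/(x) + 1 = dim R`).
If `R/(x)` is an integral domain, then `x` is a non-zerodivisor on `R` and `R` is a domain. -/
theorem deformation_of_domain_along_parameter
    (R : Type*) [CommRing R] [IsNoetherianRing R] [IsLocalRing R]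
    (x : R) (hx : x ∈ IsLocalRing.maximalIdeal R)
    (hdim : 0 < ringKrullDim R)
    (hparam : ringKrullDim (R ⧸ Ideal.span {x}) + 1 = ringKrullDim R)
    (hdom : IsDomain (R ⧸ Ideal.span {x})) :
    x ∈ nonZeroDivisors R ∧ IsDomain R := by
  have hx' : x ∈ Ring.jacobson R := by rwa [IsLocalRing.ringJacobson_eq_maximalIdeal]
  exact deformation_of_domain_along_parameter_general hx'
    (lt_ringKrullDim_of_add_one_le hparam.le) hdom
end

section
/- Let (S,𝔫) be a regular local (Noetherian) ring of prime characteristic p > 0, let I be an ideal of S, and let x ∈ S be an element whose image in S/I is a non-zerodivisor. Then the image of x in S/I^[p] is a non-zerodivisor, where I^[p] is the Frobenius power of I. -/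
open IsLocalRing

/-- The Frobenius power `I^[p]` of an ideal: the ideal generated by the `p`-th powers of
all elements of `I`. -/
def frobeniusPower (p : ℕ) {R : Type*} [CommRing R] (I : Ideal R) : Ideal R :=
  Ideal.span ((fun r => r ^ p) '' (I : Set R))

/-- `(S,𝔫)` is a regular local ring: a Noetherian local ring whose maximal ideal is
generated by `dim S` elements. -/
def IsRegularLocal (S : Type*) [CommRing S] [IsLocalRing S] : Prop :=
  ∃ (n : ℕ) (f : Fin n → S), Ideal.span (Set.range f) = maximalIdeal S ∧
    (n : WithBot (WithTop ℕ)) = ringKrullDim S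

/-!
The heart of the matter is that the Frobenius endomorphism of a regular local ring is flat.
A regular system of parameters is a regular sequence, hence so is the sequence of its `p`-th
powers, and this is the sequence of parameters acting on `S` through Frobenius. Killing the
parameters one at a time shows that `Tor₁` of the residue field with `S`, viewed as a module over
itself through Frobenius, vanishes, and the local criterion of flatness applies. Flat base change
along Frobenius preserves injectivity of multiplication by `x` on `S ⧸ I`, turning it into
multiplication by `x ^ p` on the quotient by the Frobenius power.
-/

open Function RingTheory.Sequence TensorProduct

section Dimension

variable {R : Type*} [CommRing R]

lemma exists_isPrime_natCast_le_ringKrullDim_quotient {n : ℕ}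
    (hn : (n : WithBot ℕ∞) ≤ ringKrullDim R) :
    ∃ P : Ideal R, P.IsPrime ∧ (n : WithBot ℕ∞) ≤ ringKrullDim (R ⧸ P) := by
  obtain ⟨l, hl⟩ := Order.le_krullDim_iff.mp hn
  refine ⟨l.head.asIdeal, l.head.isPrime, ?_⟩
  rw [ringKrullDim_quotient, Order.le_krullDim_iff]
  exact ⟨⟨l.length, fun i => ⟨l i, l.head_le i⟩, l.step⟩, hl⟩

lemma ringKrullDim_quotient_add_one_le_of_lt {P Q : Ideal R} [P.IsPrime] (hPQ : P < Q) :
    ringKrullDim (R ⧸ Q) + 1 ≤ ringKrullDim (R ⧸ P) := by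
  obtain ⟨r, hrQ, hrP⟩ := SetLike.exists_of_lt hPQ
  refine ringKrullDim_succ_le_of_surjective (Ideal.Quotient.factor hPQ.le)
    (Ideal.Quotient.factor_surjective hPQ.le) (r := Ideal.Quotient.mk P r)
    (mem_nonZeroDivisors_of_ne_zero ?_) ?_
  · rwa [Ne, Ideal.Quotient.eq_zero_iff_mem]
  · rwa [Ideal.Quotient.factor_mk, Ideal.Quotient.eq_zero_iff_mem]

variable [IsLocalRing R]

lemma isLocalRing_quotient {I : Ideal R} (hI : I ≠ ⊤) : IsLocalRing (R ⧸ I) :=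
  have := Ideal.Quotient.nontrivial_iff.mpr hI
  .of_surjective' (Ideal.Quotient.mk I) Ideal.Quotient.mk_surjective

lemma map_mk_maximalIdeal (I : Ideal R) [IsLocalRing (R ⧸ I)] :
    (maximalIdeal R).map (Ideal.Quotient.mk I) = maximalIdeal (R ⧸ I) :=
  map_maximalIdeal_of_surjective _ Ideal.Quotient.mk_surjective

variable [IsNoetherianRing R]

lemma ringKrullDim_le_length {rs : List R} (hrs : Ideal.ofList rs = maximalIdeal R) :
    ringKrullDim R ≤ rs.length := by
  classical
  have hcard : (maximalIdeal R).spanFinrank ≤ rs.length := by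
    rw [← hrs, Ideal.ofList, ← List.coe_toFinset]
    exact (Submodule.spanFinrank_span_le_ncard_of_finite (Finset.finite_toSet _)).trans
      (by rw [Set.ncard_coe_finset]; exact rs.toFinset_card_le)
  exact (ringKrullDim_le_spanFinrank_maximalIdeal R).trans (by exact_mod_cast hcard)

lemma ringKrullDim_quotient_le_quotient_sup_span_singleton_add_one (I : Ideal R) {r : R}
    (hI : I ≠ ⊤) (hr : r ∈ maximalIdeal R) :
    ringKrullDim (R ⧸ I) ≤ ringKrullDim (R ⧸ I ⊔ Ideal.span {r}) + 1 := by
  have := isLocalRing_quotient hI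
  have hmem : Ideal.Quotient.mk I r ∈ maximalIdeal (R ⧸ I) :=
    map_mk_maximalIdeal I ▸ Ideal.mem_map_of_mem _ hr
  have hdim := ringKrullDim_le_ringKrullDim_quotient_add_card {Ideal.Quotient.mk I r} (by
    rwa [Finset.coe_singleton, Set.singleton_subset_iff, ringJacobson_eq_maximalIdeal])
  rwa [Finset.coe_singleton, Finset.card_singleton, Nat.cast_one, ← Set.image_singleton,
    ← Ideal.map_span,
    ringKrullDim_eq_of_ringEquiv (DoubleQuot.quotQuotEquivQuotSup I (Ideal.span {r}))] at hdim

lemma eq_bot_of_isPrime_of_lt_span_singleton_s13 {P : Ideal R} [hP : P.IsPrime] {r : R}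
    (hr : r ∈ maximalIdeal R) (hlt : P < Ideal.span {r}) : P = ⊥ := by
  have hrP : r ∉ P := fun hmem => hlt.not_ge ((Ideal.span_singleton_le_iff_mem P).mpr hmem)
  refine Submodule.eq_bot_of_le_smul_of_le_jacobson_bot (maximalIdeal R) P
    (IsNoetherian.noetherian P) (fun y hy => ?_) (maximalIdeal_le_jacobson _)
  obtain ⟨z, rfl⟩ := Ideal.mem_span_singleton'.mp (hlt.le hy)
  rw [mul_comm]
  exact Submodule.smul_mem_smul hr ((hP.mem_or_mem hy).resolve_right hrP)

end Dimension

/-- A regular system of parameters of a local ring, encoded as a list. Only one inequality between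
the length and the dimension is recorded, as the other one follows from Krull's height theorem. -/
structure IsRegularSystemOfParameters {R : Type*} [CommRing R] [IsLocalRing R]
    (rs : List R) : Prop where
  ofList_eq : Ideal.ofList rs = maximalIdeal R
  length_le : (rs.length : WithBot ℕ∞) ≤ ringKrullDim R

namespace IsRegularSystemOfParameters

variable {R : Type*} [CommRing R] [IsLocalRing R] {r : R} {rs : List R}

lemma mem_maximalIdeal {s : R} (h : IsRegularSystemOfParameters rs) (hs : s ∈ rs) :
    s ∈ maximalIdeal R :=
  h.ofList_eq ▸ Ideal.subset_span hs

lemma ofList_map_mk_eq (h : IsRegularSystemOfParameters (r :: rs))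
    [IsLocalRing (R ⧸ Ideal.span {r})] :
    Ideal.ofList (rs.map (Ideal.Quotient.mk (Ideal.span {r}))) =
      maximalIdeal (R ⧸ Ideal.span {r}) := by
  rw [← map_mk_maximalIdeal, ← h.ofList_eq, Ideal.ofList_cons, Ideal.map_sup,
    Ideal.map_quotient_self, bot_sup_eq, Ideal.map_ofList]

lemma span_singleton_ne_top (h : IsRegularSystemOfParameters (r :: rs)) :
    Ideal.span {r} ≠ ⊤ :=
  ((Ideal.span_singleton_le_iff_mem _).mpr (h.mem_maximalIdeal List.mem_cons_self)).trans_lt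
    (lt_top_iff_ne_top.mpr Ideal.IsPrime.ne_top') |>.ne

variable [IsNoetherianRing R]

lemma map_mk (h : IsRegularSystemOfParameters (r :: rs)) [IsLocalRing (R ⧸ Ideal.span {r})] :
    IsRegularSystemOfParameters (rs.map (Ideal.Quotient.mk (Ideal.span {r}))) where
  ofList_eq := h.ofList_map_mk_eq
  length_le := by
    have hdim := h.length_le.trans <| (ringKrullDim_eq_of_ringEquiv
      (RingEquiv.quotientBot R)).ge.trans <|
      ringKrullDim_quotient_le_quotient_sup_span_singleton_add_one ⊥ bot_ne_top
        (h.mem_maximalIdeal List.mem_cons_self)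
    rw [bot_sup_eq, List.length_cons, Nat.cast_add_one] at hdim
    rw [List.length_map]
    exact ENat.WithBot.add_le_add_one_right_iff.mp hdim

lemma ringKrullDim_quotient_span_singleton_le (h : IsRegularSystemOfParameters (r :: rs)) :
    ringKrullDim (R ⧸ Ideal.span {r}) ≤ rs.length := by
  have := isLocalRing_quotient h.span_singleton_ne_top
  simpa only [List.length_map] using ringKrullDim_le_length h.ofList_map_mk_eq

lemma ne_zero (h : IsRegularSystemOfParameters (r :: rs)) : r ≠ 0 := by
  rintro rfl
  have hrs : Ideal.ofList rs = maximalIdeal R := by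
    rw [← h.ofList_eq, Ideal.ofList_cons, Ideal.span_singleton_zero, bot_sup_eq]
  have hlen := h.length_le.trans (ringKrullDim_le_length hrs)
  rw [Nat.cast_le, List.length_cons] at hlen
  omega

/- A prime `P` with `dim R ⧸ P = dim R` lies in `(r)`: otherwise
`dim R ⧸ (P + (r)) < dim R ⧸ (r) < dim R`, whereas killing `r` lowers the dimension of `R ⧸ P` by at
most one. As `P ≠ (r)`, this gives `P = r P`, and `P = 0` by Nakayama. -/
lemma isDomain_of_isDomain_quotient (h : IsRegularSystemOfParameters (r :: rs))
    [hr : IsDomain (R ⧸ Ideal.span {r})] : IsDomain R := by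
  have : (Ideal.span {r}).IsPrime := (Ideal.Quotient.isDomain_iff_prime _).mp hr
  obtain ⟨P, hP, hdimP⟩ := exists_isPrime_natCast_le_ringKrullDim_quotient h.length_le
  rw [List.length_cons, Nat.cast_add_one] at hdimP
  have hle : P ≤ Ideal.span {r} := by
    by_contra hnot
    have hsup := ringKrullDim_quotient_add_one_le_of_lt (right_lt_sup.mpr hnot)
    have hcut := ringKrullDim_quotient_le_quotient_sup_span_singleton_add_one P hP.ne_top
      (h.mem_maximalIdeal List.mem_cons_self)
    have := hdimP.trans <| hcut.trans <| hsup.trans h.ringKrullDim_quotient_span_singleton_le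
    rw [ENat.WithBot.add_one_le_natCast_iff] at this
    exact this.false
  have hne : P ≠ Ideal.span {r} := by
    rintro rfl
    exact (ENat.WithBot.add_one_le_iff.mp
      (hdimP.trans h.ringKrullDim_quotient_span_singleton_le)).false
  obtain rfl : P = ⊥ := eq_bot_of_isPrime_of_lt_span_singleton_s13
    (h.mem_maximalIdeal List.mem_cons_self) (hle.lt_of_ne hne)
  exact .of_bot_isPrime R

theorem isDomain {R : Type*} [CommRing R] [IsLocalRing R] [IsNoetherianRing R] :
    ∀ {rs : List R}, IsRegularSystemOfParameters rs → IsDomain R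
  | [], h =>
    have : (⊥ : Ideal R).IsPrime :=
      Ideal.ofList_nil (R := R) ▸ h.ofList_eq ▸ (maximalIdeal.isMaximal R).isPrime
    .of_bot_isPrime R
  | r :: rs, h =>
    have := isLocalRing_quotient h.span_singleton_ne_top
    have := isDomain h.map_mk
    h.isDomain_of_isDomain_quotient
  termination_by rs => rs.length

theorem isWeaklyRegular {R : Type*} [CommRing R] [IsLocalRing R] [IsNoetherianRing R] :
    ∀ {rs : List R}, IsRegularSystemOfParameters rs → IsWeaklyRegular R rs
  | [], _ => .nil R R
  | r :: rs, h => by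
    have := isLocalRing_quotient h.span_singleton_ne_top
    have := h.isDomain
    refine .cons (.of_ne_zero h.ne_zero) ?_
    let e : QuotSMulTop r R ≃ₗ[R] R ⧸ Ideal.span {r} :=
      Submodule.quotEquivOfEq _ _ (by simp [← Submodule.ideal_span_singleton_smul])
    rw [e.isWeaklyRegular_congr, ← isWeaklyRegular_map_algebraMap_iff (R ⧸ Ideal.span {r})]
    exact isWeaklyRegular h.map_mk
  termination_by rs => rs.length

end IsRegularSystemOfParameters

section Powers

variable {R M : Type*} [CommRing R] [IsLocalRing R] [AddCommGroup M] [Module R M]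
  [IsNoetherian R M]

/- Raising the last entry of a regular sequence to a power is harmless, and over a local ring
every entry can be moved to the end. -/
lemma isWeaklyRegular_pow_cons {r : R} {rs : List R} {n : ℕ} (hn : n ≠ 0)
    (hmem : ∀ s ∈ r :: rs, s ∈ maximalIdeal R) (h : IsWeaklyRegular M (r :: rs)) :
    IsWeaklyRegular M (r ^ n :: rs) := by
  rw [List.forall_mem_cons] at hmem
  have hlast : IsWeaklyRegular M (rs ++ [r]) :=
    isWeaklyRegular_of_perm_of_subset_maximalIdeal h (List.perm_append_singleton r rs).symm
      (List.forall_mem_cons.mpr hmem)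
  have hlastPow : IsWeaklyRegular M (rs ++ [r ^ n]) := by
    rw [isWeaklyRegular_append_iff, isWeaklyRegular_singleton_iff] at hlast ⊢
    exact ⟨hlast.1, hlast.2.pow n⟩
  refine isWeaklyRegular_of_perm_of_subset_maximalIdeal hlastPow
    (List.perm_append_singleton _ _) (List.forall_mem_append.mpr ⟨hmem.2, ?_⟩)
  exact List.forall_mem_singleton.mpr (Ideal.pow_mem_of_mem _ hmem.1 n hn.bot_lt)

theorem isWeaklyRegular_map_pow {rs : List R} {n : ℕ} (hn : n ≠ 0)
    (hmem : ∀ s ∈ rs, s ∈ maximalIdeal R) (h : IsWeaklyRegular M rs) :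
    IsWeaklyRegular M (rs.map (· ^ n)) := by
  induction rs generalizing M with
  | nil => exact .nil R M
  | cons r rs ih =>
    have hpow := (isWeaklyRegular_cons_iff _ _ _).mp (isWeaklyRegular_pow_cons hn hmem h)
    exact .cons hpow.1 (ih (List.forall_mem_cons.mp hmem).2 hpow.2)

end Powers

/- For an exact sequence `0 → K → P → A → 0` with `P` flat, injectivity of `i.lTensor N`, where
`i : K → P`, is the vanishing of `Tor₁(N, A)`. -/
section Tor

variable {R : Type*} [CommRing R]
variable {K P A : Type*} [AddCommGroup K] [Module R K] [AddCommGroup P] [Module R P]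
  [AddCommGroup A] [Module R A] {i : K →ₗ[R] P} {q : P →ₗ[R] A}
variable {N' N N'' : Type*} [AddCommGroup N'] [Module R N'] [AddCommGroup N] [Module R N]
  [AddCommGroup N''] [Module R N''] {f : N' →ₗ[R] N} {g : N →ₗ[R] N''}

lemma lTensor_injective_congr (e : N ≃ₗ[R] N') :
    Injective (i.lTensor N) ↔ Injective (i.lTensor N') := by
  have hcomm : (e.rTensor P).toLinearMap ∘ₗ i.lTensor N =
      i.lTensor N' ∘ₗ (e.rTensor K).toLinearMap := by
    ext; simp
  rw [← (e.rTensor P).injective.of_comp_iff, ← Injective.of_comp_iff' _ (e.rTensor K).bijective]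
  exact iff_of_eq (congrArg (Injective ·) (congrArg DFunLike.coe hcomm))

lemma lTensor_injective_of_exact [Module.Flat R P] (hfg : Exact f g) (hf : Injective f)
    (hg : Surjective g) (hN' : Injective (i.lTensor N')) (hN'' : Injective (i.lTensor N'')) :
    Injective (i.lTensor N) := by
  rw [injective_iff_map_eq_zero]
  intro z hz
  have hgz : g.rTensor K z = 0 := (map_eq_zero_iff _ hN'').mp <| by
    rw [← LinearMap.comp_apply, LinearMap.lTensor_comp_rTensor, ← LinearMap.rTensor_comp_lTensor,
      LinearMap.comp_apply, hz, map_zero]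
  obtain ⟨w, rfl⟩ := (rTensor_exact K hfg hg z).mp hgz
  have hw : w = 0 := (map_eq_zero_iff _ hN').mp <|
    (map_eq_zero_iff _ (Module.Flat.rTensor_preserves_injective_linearMap f hf)).mp <| by
      rw [← LinearMap.comp_apply, LinearMap.rTensor_comp_lTensor,
        ← LinearMap.lTensor_comp_rTensor, LinearMap.comp_apply, hz]
  rw [hw, map_zero]

lemma quotSMulTop_lTensor_injective (hiq : Exact i q) (hq : Surjective q) {r : R}
    (hr : IsSMulRegular (N ⊗[R] A) r) (hN : Injective (i.lTensor N)) :
    Injective (i.lTensor (QuotSMulTop r N)) := by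
  refine lTensor_injective_of_exact_of_exact_of_rTensor_injective
    (LinearMap.exact_lsmul_mkQ_smul_top N r) (Submodule.mkQ_surjective _) hiq hq ?_ hN
  exact (congrArg DFunLike.coe (LinearMap.rTensor_smul_action A N r)).symm.subst hr

lemma quotient_ofList_smul_top_lTensor_injective (hiq : Exact i q) (hq : Surjective q) {rs : List R}
    (hrs : IsWeaklyRegular (N ⊗[R] A) rs) (hN : Injective (i.lTensor N)) :
    Injective (i.lTensor (N ⧸ (Ideal.ofList rs • ⊤ : Submodule R N))) := by
  induction rs generalizing N with
  | nil =>
    refine (lTensor_injective_congr (Submodule.quotEquivOfEqBot _ ?_)).mpr hN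
    rw [Ideal.ofList_nil, Submodule.bot_smul]
  | cons r rs ih =>
    rw [isWeaklyRegular_cons_iff,
      ← (QuotSMulTop.quotSMulTopTensorEquivQuotSMulTop r A N).isWeaklyRegular_congr] at hrs
    rw [lTensor_injective_congr (Submodule.quotOfListConsSMulTopEquivQuotSMulTopInner N r rs)]
    exact ih hrs.2 (quotSMulTop_lTensor_injective hiq hq hrs.1 hN)

lemma lTensor_injective_of_isFiniteLength [Module.Flat R P] [IsLocalRing R]
    (hk : Injective (i.lTensor (R ⧸ maximalIdeal R))) (hN : IsFiniteLength R N) :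
    Injective (i.lTensor N) := by
  induction hN with
  | of_subsingleton => exact injective_of_subsingleton _
  | @of_simple_quotient N _ _ L hsimple _ ih =>
    obtain ⟨m, hm, ⟨e⟩⟩ := isSimpleModule_iff_quot_maximal.mp hsimple
    obtain rfl := eq_maximalIdeal hm
    exact lTensor_injective_of_exact (LinearMap.exact_subtype_mkQ L) L.subtype_injective
      L.mkQ_surjective ih ((lTensor_injective_congr e).mpr hk)

end Tor

section LocalCriterion

lemma exists_flat_presentation.{u, v} (R : Type u) [CommRing R] (A : Type v) [AddCommGroup A]
    [Module R A] :
    ∃ (K P : Type (max u v)) (_ : AddCommGroup K) (_ : Module R K) (_ : AddCommGroup P)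
      (_ : Module R P) (_ : Module.Flat R P) (i : K →ₗ[R] P) (q : P →ₗ[R] A),
      Injective i ∧ Exact i q ∧ Surjective q :=
  let q := Finsupp.linearCombination R (id : A → A)
  ⟨LinearMap.ker q, A →₀ R, inferInstance, inferInstance, inferInstance, inferInstance,
    inferInstance, (LinearMap.ker q).subtype, q, Submodule.subtype_injective _,
    LinearMap.exact_subtype_ker_map q, Finsupp.linearCombination_id_surjective R A⟩

variable {R : Type*} [CommRing R]

lemma lTensor_subtype_injective_iff {K P A : Type*} [AddCommGroup K] [Module R K]
    [AddCommGroup P] [Module R P] [AddCommGroup A] [Module R A] [Module.Flat R P]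
    {i : K →ₗ[R] P} {q : P →ₗ[R] A} (hi : Injective i) (hiq : Exact i q) (hq : Surjective q)
    (I : Ideal R) :
    Injective (I.subtype.lTensor A) ↔ Injective (i.lTensor (R ⧸ I)) := by
  constructor
  · intro hI
    exact lTensor_injective_of_exact_of_exact_of_rTensor_injective
      (LinearMap.exact_subtype_mkQ I) I.mkQ_surjective hiq hq
      ((LinearMap.lTensor_inj_iff_rTensor_inj A _).mp hI)
      (Module.Flat.lTensor_preserves_injective_linearMap i hi)
  · intro hI
    exact lTensor_injective_of_exact_of_exact_of_rTensor_injective hiq hq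
      (LinearMap.exact_subtype_mkQ I) I.mkQ_surjective
      ((LinearMap.lTensor_inj_iff_rTensor_inj _ _).mp hI)
      (Module.Flat.lTensor_preserves_injective_linearMap _ I.subtype_injective)

lemma ofList_subtype_lTensor_injective {A : Type*} [AddCommGroup A] [Module R A] {rs : List R}
    (hrs : IsWeaklyRegular A rs) : Injective ((Ideal.ofList rs).subtype.lTensor A) := by
  obtain ⟨K, P, _, _, _, _, _, i, q, hi, hiq, hq⟩ := exists_flat_presentation R A
  rw [lTensor_subtype_injective_iff hi hiq hq, ← lTensor_injective_congr
    (Submodule.quotEquivOfEq (Ideal.ofList rs • ⊤) _ (Ideal.mul_top _))]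
  exact quotient_ofList_smul_top_lTensor_injective hiq hq
    ((TensorProduct.lid R A).isWeaklyRegular_congr rs |>.mpr hrs)
    (Module.Flat.lTensor_preserves_injective_linearMap _ hi)

lemma mem_range_lTensor_of_lTensor_subtype_eq_zero {A M : Type*} [AddCommGroup A] [Module R A]
    [AddCommGroup M] [Module R M] {N L : Submodule R M}
    (hinj : Injective ((N ⊔ L).subtype.lTensor A)) {z : A ⊗[R] N}
    (hz : N.subtype.lTensor A z = 0) :
    z ∈ LinearMap.range ((L.comap N.subtype).subtype.lTensor A) := by
  have hker : LinearMap.ker (LinearMap.subToSupQuotient N L) = L.comap N.subtype := by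
    rw [LinearMap.ker_comp, Submodule.ker_mkQ, ← Submodule.comap_comp,
      Submodule.subtype_comp_inclusion]
  have hexact : Exact (L.comap N.subtype).subtype (LinearMap.subToSupQuotient N L) := by
    rw [LinearMap.exact_iff, hker, Submodule.range_subtype]
  have hsurj : Surjective (LinearMap.subToSupQuotient N L) := by
    intro y
    obtain ⟨x, hx⟩ := LinearMap.quotientInfEquivSupQuotient_surjective N L y
    obtain ⟨x, rfl⟩ := Submodule.mkQ_surjective _ x
    exact ⟨x, hx⟩
  have hz' : (Submodule.inclusion (le_sup_left : N ≤ N ⊔ L)).lTensor A z = 0 := by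
    refine (map_eq_zero_iff _ hinj).mp ?_
    rw [← LinearMap.comp_apply, ← LinearMap.lTensor_comp, Submodule.subtype_comp_inclusion, hz]
  refine (lTensor_exact A hexact hsurj z).mp ?_
  rw [LinearMap.lTensor_comp, LinearMap.comp_apply, hz', map_zero]

lemma range_lTensor_subtype_le_map_smul_top {A M : Type*} [CommRing A] [Algebra R A]
    [AddCommGroup M] [Module R M] {J : Ideal R} {N : Submodule R M} (hN : N ≤ J • ⊤) :
    LinearMap.range (N.subtype.lTensor A) ≤
      (J.map (algebraMap R A) • ⊤ : Submodule A (A ⊗[R] M)).restrictScalars R := by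
  rintro _ ⟨z, rfl⟩
  induction z with
  | zero => rw [map_zero]; exact zero_mem _
  | add x y hx hy => rw [map_add]; exact add_mem hx hy
  | tmul a x =>
    rw [LinearMap.lTensor_tmul, Submodule.subtype_apply]
    refine Submodule.smul_induction_on (p := fun y => a ⊗ₜ[R] y ∈
      (J.map (algebraMap R A) • ⊤ : Submodule A (A ⊗[R] M))) (hN x.2) (fun r hr m _ => ?_)
      fun y z hy hz => ?_
    · rw [TensorProduct.tmul_smul, ← algebraMap_smul A r (a ⊗ₜ[R] m)]
      exact Submodule.smul_mem_smul (Ideal.mem_map_of_mem _ hr) trivial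
    · rw [TensorProduct.tmul_add]
      exact add_mem hy hz

lemma exists_comap_subtype_pow_smul_top_le [IsNoetherianRing R] {M : Type*} [AddCommGroup M]
    [Module R M] [Module.Finite R M] (I : Ideal R) (N : Submodule R M) (k : ℕ) :
    ∃ n, (I ^ n • ⊤ : Submodule R M).comap N.subtype ≤ I ^ k • ⊤ := by
  obtain ⟨c, hc⟩ := Ideal.exists_pow_inf_eq_pow_smul I N
  refine ⟨k + c, ?_⟩
  have hinf := hc (k + c) (Nat.le_add_left c k)
  rw [Nat.add_sub_cancel] at hinf
  refine (Submodule.map_le_map_iff_of_injective N.subtype_injective _ _).mp ?_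
  rw [Submodule.map_comap_subtype, Submodule.map_smul'', Submodule.map_subtype_top, inf_comm, hinf]
  exact smul_mono_right _ inf_le_right

lemma isFiniteLength_quotient_of_pow_le [IsLocalRing R] [IsNoetherianRing R] {I : Ideal R} {n : ℕ}
    (hI : maximalIdeal R ^ n ≤ I) : IsFiniteLength R (R ⧸ I) := by
  rcases eq_or_ne I ⊤ with rfl | hne
  · exact .of_subsingleton
  have := isLocalRing_quotient hne
  have : IsArtinianRing (R ⧸ I) := by
    rw [isArtinianRing_iff_isNilpotent_maximalIdeal, ← map_mk_maximalIdeal]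
    refine ⟨n, ?_⟩
    rwa [← Ideal.map_pow, Ideal.zero_eq_bot, Ideal.map_eq_bot_iff_le_ker, Ideal.mk_ker]
  exact isFiniteLength_iff_isNoetherian_isArtinian.mpr
    ⟨inferInstance, isArtinian_of_surjective_algebraMap (R := R ⧸ I) Ideal.Quotient.mk_surjective⟩

lemma subtype_lTensor_injective_of_pow_le [IsLocalRing R] [IsNoetherianRing R] {A : Type*}
    [AddCommGroup A] [Module R A] (hA : Injective ((maximalIdeal R).subtype.lTensor A))
    {I : Ideal R} {n : ℕ} (hI : maximalIdeal R ^ n ≤ I) : Injective (I.subtype.lTensor A) := by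
  obtain ⟨K, P, _, _, _, _, _, i, q, hi, hiq, hq⟩ := exists_flat_presentation R A
  rw [lTensor_subtype_injective_iff hi hiq hq] at hA ⊢
  exact lTensor_injective_of_isFiniteLength hA (isFiniteLength_quotient_of_pow_le hI)

/- By Artin–Rees, an element killed by `A ⊗ I → A ⊗ R` lies in `𝔪 ^ k • (A ⊗ I)` for every `k`;
Krull's intersection theorem over `A` then makes it zero. -/
theorem flat_of_maximalIdeal_subtype_lTensor_injective [IsLocalRing R] [IsNoetherianRing R]
    {A : Type*} [CommRing A] [IsNoetherianRing A] [Algebra R A]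
    (hjac : (maximalIdeal R).map (algebraMap R A) ≤ Ideal.jacobson ⊥)
    (hA : Injective ((maximalIdeal R).subtype.lTensor A)) : Module.Flat R A := by
  refine Module.Flat.iff_lTensor_injective'.mpr fun I => ?_
  rw [injective_iff_map_eq_zero]
  intro z hz
  have hmem : z ∈ ⨅ k, ((maximalIdeal R).map (algebraMap R A) ^ k • ⊤ :
      Submodule A (A ⊗[R] I)) := by
    refine (Submodule.mem_iInf _).mpr fun k => ?_
    obtain ⟨n, hn⟩ := exists_comap_subtype_pow_smul_top_le (maximalIdeal R) I k
    rw [← Ideal.map_pow]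
    exact range_lTensor_subtype_le_map_smul_top hn <|
      mem_range_lTensor_of_lTensor_subtype_eq_zero
        (subtype_lTensor_injective_of_pow_le hA ((Ideal.mul_top _).ge.trans le_sup_right)) hz
  rwa [Ideal.iInf_pow_smul_eq_bot_of_le_jacobson _ hjac, Submodule.mem_bot] at hmem

theorem flat_of_isWeaklyRegular_map {A : Type*} [CommRing A] [IsLocalRing R] [IsNoetherianRing R]
    [IsNoetherianRing A] {f : R →+* A} (hjac : (maximalIdeal R).map f ≤ Ideal.jacobson ⊥)
    {rs : List R} (hrs : Ideal.ofList rs = maximalIdeal R) (hreg : IsWeaklyRegular A (rs.map f)) :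
    f.Flat := by
  algebraize [f]
  refine flat_of_maximalIdeal_subtype_lTensor_injective hjac ?_
  rw [← hrs]
  exact ofList_subtype_lTensor_injective ((isWeaklyRegular_map_algebraMap_iff A A rs).mp hreg)

end LocalCriterion

section Frobenius

lemma mk_mem_nonZeroDivisors_iff {R : Type*} [CommRing R] {I : Ideal R} {x : R} :
    Ideal.Quotient.mk I x ∈ nonZeroDivisors (R ⧸ I) ↔ IsSMulRegular (R ⧸ I) x := by
  rw [← isRegular_iff_mem_nonZeroDivisors, Commute.isRegular_iff (Commute.all _), isLeftRegular_iff,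
    isSMulRegular_map _ fun _ => rfl]

theorem mk_map_mem_nonZeroDivisors {R A : Type*} [CommRing R] [CommRing A] {f : R →+* A}
    (hf : f.Flat) {I : Ideal R} {x : R} (hx : Ideal.Quotient.mk I x ∈ nonZeroDivisors (R ⧸ I)) :
    Ideal.Quotient.mk (I.map f) (f x) ∈ nonZeroDivisors (A ⧸ I.map f) := by
  algebraize [f]
  rw [mk_mem_nonZeroDivisors_iff] at hx ⊢
  let e := (Algebra.TensorProduct.quotIdealMapEquivTensorQuot A I).toLinearEquiv
  exact (isSMulRegular_map f fun _ => algebraMap_smul A x _).mpr <|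
    ((e.restrictScalars R).isSMulRegular_congr x).mpr (hx.lTensor A)

variable {S : Type*} [CommRing S] [IsLocalRing S]

lemma exists_isRegularSystemOfParameters (hS : IsRegularLocal S) :
    ∃ rs : List S, IsRegularSystemOfParameters rs := by
  obtain ⟨n, f, hf, hn⟩ := hS
  refine ⟨List.ofFn f, ?_, ?_⟩
  · rw [← hf, Ideal.ofList]; congr 1; ext; simp
  · rw [List.length_ofFn]; exact hn.le

theorem frobenius_flat [IsNoetherianRing S] (p : ℕ) [ExpChar S p]
    (hS : IsRegularLocal S) : (frobenius S p).Flat := by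
  obtain ⟨rs, hrs⟩ := exists_isRegularSystemOfParameters hS
  have hp0 := expChar_ne_zero S p
  have hle : (maximalIdeal S).map (frobenius S p) ≤ maximalIdeal S :=
    Ideal.map_le_iff_le_comap.mpr fun r hr => Ideal.pow_mem_of_mem _ hr p hp0.bot_lt
  exact flat_of_isWeaklyRegular_map (hle.trans (maximalIdeal_le_jacobson _)) hrs.ofList_eq
    (isWeaklyRegular_map_pow hp0 (fun _ => hrs.mem_maximalIdeal) hrs.isWeaklyRegular)

end Frobenius

/-- Let `(S,𝔫)` be a regular local ring of prime characteristic `p > 0`,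
`I` an ideal of `S`, and `x ∈ S` an element whose image in `S/I` is a non-zerodivisor.
Then the image of `x` in `S/I^[p]` is a non-zerodivisor. -/
theorem nonZeroDivisor_mod_frobeniusPower
    (p : ℕ) (hp : p.Prime)
    (S : Type*) [CommRing S] [IsNoetherianRing S] [IsLocalRing S] [CharP S p]
    (hreg : IsRegularLocal S)
    (I : Ideal S) (x : S)
    (hx : Ideal.Quotient.mk I x ∈ nonZeroDivisors (S ⧸ I)) :
    Ideal.Quotient.mk (frobeniusPower p I) x
      ∈ nonZeroDivisors (S ⧸ frobeniusPower p I) := by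
  have := ExpChar.prime (R := S) hp
  have hpow := mk_map_mem_nonZeroDivisors (frobenius_flat p hreg) hx
  rw [mk_mem_nonZeroDivisors_iff] at hpow ⊢
  exact (IsSMulRegular.pow_iff hp.pos).mp hpow
end
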